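/- arXiv:1801.04466 — 2 statements merged into one kernel-verified Lean document; each statement's English description precedes it below -/
import Mathlib

section
/- Let M be the 4×3 real matrix with rows (1, 0, 0), (2/3, 1, 1), (−2/3, 1, 0), (1/3, 0, 1). Then Mᵀ M equals the matrix [[2,0,1],[0,2,1],[1,1,2]] (the Gram matrix of the face-centered cubic lattice), and for every 3-element subset S of {1,2,3,4}: det(M_Sᵀ M_S) = 1, and for every nonzero u ∈ ℤ³, ‖M_S u‖² ≥ 1, with equality attained for some nonzero u ∈ ℤ³; here M_S is the 3×3 matrix of rows of M indexed by S. -/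
open Matrix

/-- The `k × k` submatrix of `M` formed by the rows indexed by the `k`-element subset `S`. -/
def rowsSub {n k : ℕ} (M : Matrix (Fin n) (Fin k) ℝ)
    (S : {s : Finset (Fin n) // s.card = k}) : Matrix (Fin k) (Fin k) ℝ :=
  fun i j => M ((S.1.orderIsoOfFin S.2 i : Fin n)) j

/-- Squared Euclidean norm of a vector in `ℝ^k`. -/
def sqnorm {k : ℕ} (x : Fin k → ℝ) : ℝ := ∑ i, x i ^ 2

lemma fcc_rows {n k : ℕ} (M : Matrix (Fin n) (Fin k) ℝ)
    (S : {s : Finset (Fin n) // s.card = k}) (f : Fin k → Fin n) (hf : StrictMono f)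
    (hm : ∀ i, f i ∈ S.1) : rowsSub M S = M.submatrix f id := by
  have h := Finset.orderEmbOfFin_unique S.2 hm hf
  funext i j
  rw [Matrix.submatrix_apply, h]
  rfl

lemma fcc_subsets : ∀ s : Finset (Fin 4), s.card = 3 →
    (∀ i, (![0, 1, 2] : Fin 3 → Fin 4) i ∈ s) ∨ (∀ i, (![0, 1, 3] : Fin 3 → Fin 4) i ∈ s) ∨
    (∀ i, (![0, 2, 3] : Fin 3 → Fin 4) i ∈ s) ∨ (∀ i, (![1, 2, 3] : Fin 3 → Fin 4) i ∈ s) := by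
  decide

lemma fcc_int_one_le {a b c : ℤ} (h : ¬ (a = 0 ∧ b = 0 ∧ c = 0)) :
    (1 : ℝ) ≤ (a : ℝ) ^ 2 + (b : ℝ) ^ 2 + (c : ℝ) ^ 2 := by
  have : 1 ≤ a ^ 2 + b ^ 2 + c ^ 2 := by
    by_contra hlt
    have ha := sq_nonneg a
    have hb := sq_nonneg b
    have hc := sq_nonneg c
    apply h
    refine ⟨?_, ?_, ?_⟩ <;> apply pow_eq_zero_iff (two_ne_zero) |>.1 <;> omega
  exact_mod_cast this

/-- If `x ≠ 0` the first square suffices; if `x = 0` the form is integral. -/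
lemma fcc_form {x b c : ℤ} (p q : ℝ) (h : ¬ (x = 0 ∧ b = 0 ∧ c = 0)) :
    (1 : ℝ) ≤ (x : ℝ) ^ 2 + (p * x + b) ^ 2 + (q * x + c) ^ 2 := by
  by_cases hx : x = 0
  · have := fcc_int_one_le h
    subst hx
    simpa using this
  · have := fcc_int_one_le (a := x) (b := 0) (c := 0) (by tauto)
    simp only [Int.cast_zero] at this
    nlinarith [sq_nonneg (p * x + b), sq_nonneg (q * x + c)]

/-- The paper's `(4,3)` construction with the face-centered cubic mother lattice:
`Mᵀ M` is the FCC Gram matrix, and every child lattice `M_S ℤ³` has unit Gram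
determinant and shortest nonzero vector of squared length exactly `1`. -/
theorem four_three_fcc_construction :
    letI M : Matrix (Fin 4) (Fin 3) ℝ :=
      !![1, 0, 0; 2/3, 1, 1; -2/3, 1, 0; 1/3, 0, 1]
    Mᵀ * M = !![2, 0, 1; 0, 2, 1; 1, 1, 2] ∧
    ∀ S : {s : Finset (Fin 4) // s.card = 3},
      ((rowsSub M S)ᵀ * rowsSub M S).det = 1 ∧
      (∀ u : Fin 3 → ℤ, u ≠ 0 →
        1 ≤ sqnorm ((rowsSub M S).mulVec fun j => (u j : ℝ))) ∧
      (∃ u : Fin 3 → ℤ, u ≠ 0 ∧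
        sqnorm ((rowsSub M S).mulVec fun j => (u j : ℝ)) = 1) := by
  refine ⟨?_, ?_⟩
  · ext i j
    fin_cases i <;> fin_cases j <;>
      simp [Matrix.mul_apply, Fin.sum_univ_succ] <;> norm_num
  intro S
  have hne : ∀ u : Fin 3 → ℤ, u ≠ 0 → ¬ (u 0 = 0 ∧ u 1 = 0 ∧ u 2 = 0) := by
    rintro u hu ⟨h0, h1, h2⟩
    apply hu
    funext i
    fin_cases i <;> assumption
  rcases fcc_subsets S.1 S.2 with hm | hm | hm | hm
  · rw [fcc_rows _ S _ (by decide) hm]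
    refine ⟨?_, ?_, ![0, 0, 1], ?_, ?_⟩
    · rw [Matrix.det_mul, Matrix.det_transpose, Matrix.det_fin_three]
      simp <;> norm_num
    · intro u hu
      have := fcc_form (x := u 0) (b := u 1 + u 2) (c := u 1) (2/3) (-2/3) (by have := hne u hu; omega)
      simp [sqnorm, Matrix.mulVec, dotProduct, Fin.sum_univ_three]
      push_cast at this
      linarith
    · decide
    · simp [sqnorm, Matrix.mulVec, dotProduct, Fin.sum_univ_three] <;> norm_num
  · rw [fcc_rows _ S _ (by decide) hm]
    refine ⟨?_, ?_, ![0, 1, 0], ?_, ?_⟩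
    · rw [Matrix.det_mul, Matrix.det_transpose, Matrix.det_fin_three]
      simp <;> norm_num
    · intro u hu
      have := fcc_form (x := u 0) (b := u 1 + u 2) (c := u 2) (2/3) (1/3) (by have := hne u hu; omega)
      simp [sqnorm, Matrix.mulVec, dotProduct, Fin.sum_univ_three]
      push_cast at this
      linarith
    · decide
    · simp [sqnorm, Matrix.mulVec, dotProduct, Fin.sum_univ_three] <;> norm_num
  · rw [fcc_rows _ S _ (by decide) hm]
    refine ⟨?_, ?_, ![0, 1, 0], ?_, ?_⟩
    · rw [Matrix.det_mul, Matrix.det_transpose, Matrix.det_fin_three]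
      simp <;> norm_num
    · intro u hu
      have := fcc_form (x := u 0) (b := u 1) (c := u 2) (-2/3) (1/3) (by have := hne u hu; omega)
      simp [sqnorm, Matrix.mulVec, dotProduct, Fin.sum_univ_three]
      push_cast at this
      linarith
    · decide
    · simp [sqnorm, Matrix.mulVec, dotProduct, Fin.sum_univ_three] <;> norm_num
  · rw [fcc_rows _ S _ (by decide) hm]
    refine ⟨?_, ?_, ![1, 0, 0], ?_, ?_⟩
    · rw [Matrix.det_mul, Matrix.det_transpose, Matrix.det_fin_three]
      simp <;> norm_num
    · intro u hu
      have := fcc_int_one_le (a := u 0 + u 2) (b := u 1 + u 2) (c := u 1) (by have := hne u hu; omega)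
      simp [sqnorm, Matrix.mulVec, dotProduct, Fin.sum_univ_three]
      push_cast at this
      linarith
    · decide
    · simp [sqnorm, Matrix.mulVec, dotProduct, Fin.sum_univ_three] <;> norm_num
end

section
/- Let b = 1/2 + √(1/2) and c = 1/2 − √(1/2), and let M be the 4×3 real matrix with rows (−c, c, b), (−c, b, c), (−b, c, b), (b, −b, −c). Then Mᵀ M equals the matrix [[3,−1,−1],[−1,3,−1],[−1,−1,3]] (the Gram matrix of the body-centered cubic lattice), and for every 3-element subset S of {1,2,3,4}: det(M_Sᵀ M_S) = 4, and for every nonzero u ∈ ℤ³, ‖M_S u‖² ≥ 9/4 − 1/√2, with equality attained for some nonzero u ∈ ℤ³; here M_S is the 3×3 matrix of rows of M indexed by S. -/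
open Matrix

lemma rowsSub_sum {n k : ℕ} (S : {s : Finset (Fin n) // s.card = k}) (f : Fin n → ℝ) :
    ∑ i, f (S.1.orderIsoOfFin S.2 i : Fin n) = ∑ i ∈ S.1, f i := by
  rw [← Finset.sum_coe_sort S.1 f]
  exact Equiv.sum_comp (S.1.orderIsoOfFin S.2).toEquiv (fun i : S.1 => f i)

lemma rowsSub_gram {n k : ℕ} (M : Matrix (Fin n) (Fin k) ℝ)
    (S : {s : Finset (Fin n) // s.card = k}) :
    (rowsSub M S)ᵀ * rowsSub M S = Matrix.of fun j l => ∑ i ∈ S.1, M i j * M i l := by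
  ext j l
  simp only [Matrix.mul_apply, Matrix.transpose_apply, rowsSub, Matrix.of_apply]
  exact rowsSub_sum S (fun i => M i j * M i l)

lemma rowsSub_sqnorm {n k : ℕ} (M : Matrix (Fin n) (Fin k) ℝ)
    (S : {s : Finset (Fin n) // s.card = k}) (v : Fin k → ℝ) :
    sqnorm ((rowsSub M S).mulVec v) = ∑ i ∈ S.1, (∑ j, M i j * v j) ^ 2 :=
  rowsSub_sum S (fun i => (∑ j, M i j * v j) ^ 2)

lemma three_subsets (s : Finset (Fin 4)) (h : s.card = 3) :
    s = {0, 1, 2} ∨ s = {0, 1, 3} ∨ s = {0, 2, 3} ∨ s = {1, 2, 3} := by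
  revert s
  decide

lemma one_le_sq_cast {n : ℤ} (h : n ≠ 0) : (1 : ℝ) ≤ (n : ℝ) ^ 2 := by
  have : 1 ≤ n ^ 2 := by
    have : 0 < n ^ 2 := by positivity
    omega
  exact_mod_cast this

/-- The common form of all four child lattices, as a nonnegative combination of squares. -/
lemma form_bound (s : ℝ) (h1 : 0.7 < s) (h2 : s < 0.71) (X Y Z : ℤ)
    (h : ¬ (X = 0 ∧ Y = 0 ∧ Z = 0)) :
    9 / 4 - s ≤ (s - 1 / 4) * ((X : ℝ) - Y) ^ 2 + (1 - s) * ((X : ℝ) - Z) ^ 2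
      + (1 - s) * ((Y : ℝ) - Z) ^ 2 + (3 / 2 - s) * ((X : ℝ) ^ 2 + (Y : ℝ) ^ 2)
      + 2 * s * (Z : ℝ) ^ 2 := by
  have a1 : 0 ≤ (s - 1 / 4) * ((X : ℝ) - Y) ^ 2 := mul_nonneg (by linarith) (sq_nonneg _)
  have a2 : 0 ≤ (1 - s) * ((X : ℝ) - Z) ^ 2 := mul_nonneg (by linarith) (sq_nonneg _)
  have a3 : 0 ≤ (1 - s) * ((Y : ℝ) - Z) ^ 2 := mul_nonneg (by linarith) (sq_nonneg _)
  have a4 : 0 ≤ (3 / 2 - s) * (X : ℝ) ^ 2 := mul_nonneg (by linarith) (sq_nonneg _)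
  have a5 : 0 ≤ (3 / 2 - s) * (Y : ℝ) ^ 2 := mul_nonneg (by linarith) (sq_nonneg _)
  by_cases hZ : Z = 0
  · subst hZ
    by_cases hX : X = 0
    · subst hX
      have hY : Y ≠ 0 := fun hY => h ⟨rfl, hY, rfl⟩
      have := one_le_sq_cast hY
      push_cast
      nlinarith
    · have hX' := one_le_sq_cast hX
      by_cases hY : Y = 0
      · subst hY
        push_cast
        nlinarith
      · have hY' := one_le_sq_cast hY
        push_cast at *
        nlinarith
  · have hZ' := one_le_sq_cast hZ
    have b : 2 * s * 1 ≤ 2 * s * (Z : ℝ) ^ 2 := mul_le_mul_of_nonneg_left hZ' (by linarith)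
    by_cases hX : X = 0
    · by_cases hY : Y = 0
      · subst hX hY
        push_cast
        nlinarith
      · have hY' := one_le_sq_cast hY
        nlinarith
    · have hX' := one_le_sq_cast hX
      nlinarith

/-- The paper's `(4,3)` construction with the body-centered cubic mother lattice:
with `b = 1/2 + √(1/2)` and `c = 1/2 − √(1/2)`, `Mᵀ M` is the BCC Gram matrix, and
every child lattice `M_S ℤ³` has Gram determinant `4` and shortest nonzero vector of
squared length exactly `9/4 − 1/√2`. -/
theorem four_three_bcc_construction :
    letI b : ℝ := 1 / 2 + Real.sqrt (1 / 2)
    letI c : ℝ := 1 / 2 - Real.sqrt (1 / 2)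
    letI M : Matrix (Fin 4) (Fin 3) ℝ :=
      !![-c, c, b; -c, b, c; -b, c, b; b, -b, -c]
    Mᵀ * M = !![3, -1, -1; -1, 3, -1; -1, -1, 3] ∧
    ∀ S : {s : Finset (Fin 4) // s.card = 3},
      ((rowsSub M S)ᵀ * rowsSub M S).det = 4 ∧
      (∀ u : Fin 3 → ℤ, u ≠ 0 →
        9 / 4 - 1 / Real.sqrt 2 ≤ sqnorm ((rowsSub M S).mulVec fun j => (u j : ℝ))) ∧
      (∃ u : Fin 3 → ℤ, u ≠ 0 ∧
        sqnorm ((rowsSub M S).mulVec fun j => (u j : ℝ)) = 9 / 4 - 1 / Real.sqrt 2) := by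
  have hs2 : Real.sqrt (1 / 2) ^ 2 = 1 / 2 := Real.sq_sqrt (by norm_num)
  have hs0 : 0 ≤ Real.sqrt (1 / 2) := Real.sqrt_nonneg _
  have hinv : (Real.sqrt 2)⁻¹ = Real.sqrt (1 / 2) := by
    rw [one_div, Real.sqrt_inv]
  generalize Real.sqrt (1 / 2) = s at *
  have h1 : 0.7 < s := by nlinarith
  have h2 : s < 0.71 := by nlinarith
  refine ⟨?_, ?_⟩
  · ext i j
    fin_cases i <;> fin_cases j <;> simp [Matrix.mul_apply, Fin.sum_univ_four] <;> grind
  rintro ⟨S, hS⟩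
  rcases three_subsets S hS with rfl | rfl | rfl | rfl
  · refine ⟨?_, ?_, ?_⟩
    · rw [rowsSub_gram, Matrix.det_fin_three]
      simp [Finset.sum_insert]
      grind
    · intro u hu
      have hb := form_bound s h1 h2 (u 0 - u 2) (- u 1) (- u 2) (by
        rintro ⟨e1, e2, e3⟩
        apply hu
        ext i
        fin_cases i <;> simp <;> omega)
      rw [rowsSub_sqnorm]
      simp [Finset.sum_insert, Fin.sum_univ_three]
      push_cast at hb
      rw [hinv]
      rw [← sub_le_iff_le_add]
      refine hb.trans (le_of_eq ?_)
      grind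
    · refine ⟨![1, 0, 0], by decide, ?_⟩
      rw [rowsSub_sqnorm]
      simp [Finset.sum_insert, Fin.sum_univ_three]
      rw [hinv]
      grind
  · refine ⟨?_, ?_, ?_⟩
    · rw [rowsSub_gram, Matrix.det_fin_three]
      simp [Finset.sum_insert]
      grind
    · intro u hu
      have hb := form_bound s h1 h2 (u 0 - u 1) (- u 2) (- u 1) (by
        rintro ⟨e1, e2, e3⟩
        apply hu
        ext i
        fin_cases i <;> simp <;> omega)
      rw [rowsSub_sqnorm]
      simp [Finset.sum_insert, Fin.sum_univ_three]
      push_cast at hb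
      rw [hinv]
      rw [← sub_le_iff_le_add]
      refine hb.trans (le_of_eq ?_)
      grind
    · refine ⟨![1, 0, 0], by decide, ?_⟩
      rw [rowsSub_sqnorm]
      simp [Finset.sum_insert, Fin.sum_univ_three]
      rw [hinv]
      grind
  · refine ⟨?_, ?_, ?_⟩
    · rw [rowsSub_gram, Matrix.det_fin_three]
      simp [Finset.sum_insert]
      grind
    · intro u hu
      have hb := form_bound s h1 h2 (u 2) (u 1 - u 0) (u 2 - u 0) (by
        rintro ⟨e1, e2, e3⟩
        apply hu
        ext i
        fin_cases i <;> simp <;> omega)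
      rw [rowsSub_sqnorm]
      simp [Finset.sum_insert, Fin.sum_univ_three]
      push_cast at hb
      rw [hinv]
      rw [← sub_le_iff_le_add]
      refine hb.trans (le_of_eq ?_)
      grind
    · refine ⟨![0, 1, 0], by decide, ?_⟩
      rw [rowsSub_sqnorm]
      simp [Finset.sum_insert, Fin.sum_univ_three]
      rw [hinv]
      grind
  · refine ⟨?_, ?_, ?_⟩
    · rw [rowsSub_gram, Matrix.det_fin_three]
      simp [Finset.sum_insert]
      grind
    · intro u hu
      have hb := form_bound s h1 h2 (u 1) (u 2 - u 0) (u 1 - u 0) (by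
        rintro ⟨e1, e2, e3⟩
        apply hu
        ext i
        fin_cases i <;> simp <;> omega)
      rw [rowsSub_sqnorm]
      simp [Finset.sum_insert, Fin.sum_univ_three]
      push_cast at hb
      rw [hinv]
      rw [← sub_le_iff_le_add]
      refine hb.trans (le_of_eq ?_)
      grind
    · refine ⟨![0, 0, 1], by decide, ?_⟩
      rw [rowsSub_sqnorm]
      simp [Finset.sum_insert, Fin.sum_univ_three]
      rw [hinv]
      grind
end
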